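/- Let k ≥ 3 and n_1, …, n_k be positive integers, let t be the number of indices i with n_i odd, let I_1 = {i : n_i = 1}, and let I_2 = {i : n_i = 2}. If t = 2 and |I_1| + |I_2| ≤ 1, then the signed domination number of the complete k-partite graph K_{n_1,…,n_k} equals 4. -/

import Mathlib

open scoped Classical

/-- The signed domination number of a finite simple graph `G`: the minimum weight of a
function `f : V → {−1, 1}` such that `f(N[v]) ≥ 1` for every vertex `v`. -/
noncomputable def signedDomNum {V : Type*} [Fintype V] (G : SimpleGraph V) : ℤ :=
  sInf {w : ℤ | ∃ f : V → ℤ, (∀ v, f v = 1 ∨ f v = -1) ∧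
    (∀ v, 1 ≤ f v + ∑ u ∈ G.neighborFinset v, f u) ∧ w = ∑ v, f v}

/-!
Write `s i` for the sum of a signed dominating function `f` over the `i`-th part and `w` for its
weight. A vertex of part `i` sees everything outside its part and itself, so domination says
`s i < w + f v` for each vertex `v` of that part. Hence a part containing a `-1` has `s i ≤ w - 2`,
and a part without `-1` has `s i = n i ≤ w`.

These bounds force `w > 0`, and `w ≡ ∑ i, n i` is even. If `w` were `2`, then a part of positive sum
could only be constantly `1` of size `1` or `2`, and every other odd part would have sum at most
`-1`; adding up gives `w ≤ 2 (|I₁| + |I₂|) - t ≤ 0`. So `w ≥ 4`. Equality holds when the two odd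
parts have sum `1`, one even part has sum `2`, and all others have sum `0`.
-/

section SignFunctions

open scoped Finset

variable {α : Type*}

theorem even_sum_iff_even_card_of_forall_odd {s : Finset α} {f : α → ℤ}
    (hf : ∀ x ∈ s, Odd (f x)) : Even (∑ x ∈ s, f x) ↔ Even #s := by
  have hdiff : Even (∑ x ∈ s, f x - (#s : ℤ)) := by
    have heven : Even (∑ x ∈ s, (f x - 1)) :=
      Finset.even_sum _ fun x hx => (hf x hx).sub_odd odd_one
    simpa using heven
  rw [← Int.even_coe_nat]
  exact Int.even_sub.mp hdiff

theorem exists_sign_sum_eq [Fintype α] {s : ℤ} (hs : |s| ≤ Fintype.card α)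
    (hparity : Even s ↔ Even (Fintype.card α)) :
    ∃ f : α → ℤ, (∀ x, f x = 1 ∨ f x = -1) ∧ ∑ x, f x = s := by
  obtain ⟨m, hm⟩ : Even (s + Fintype.card α) := by
    rwa [Int.even_add, Int.even_coe_nat]
  rw [abs_le] at hs
  obtain ⟨A, -, hA⟩ : ∃ A ⊆ (Finset.univ : Finset α), #A = m.toNat :=
    Finset.exists_subset_card_eq (by rw [Finset.card_univ]; omega)
  refine ⟨fun x => 2 * (if x ∈ A then 1 else 0) - 1, fun x => ?_, ?_⟩
  · by_cases hx : x ∈ A <;> simp [hx]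
  · rw [Finset.sum_sub_distrib, ← Finset.mul_sum, Finset.sum_boole, Finset.filter_univ_mem]
    simp only [Finset.sum_const, Finset.card_univ, nsmul_eq_mul, mul_one]
    omega

end SignFunctions

section SignedDominating

variable {V : Type*} [Fintype V] {G : SimpleGraph V} {f : V → ℤ}

/-- The functions `V → {−1, 1}` over whose weights `signedDomNum` is the minimum, encoded as
integer-valued functions; the closed neighborhood `N[v]` is split into `v` and its neighbors. -/
structure IsSignedDominating (G : SimpleGraph V) (f : V → ℤ) : Prop where
  eq_one_or_neg_one : ∀ v, f v = 1 ∨ f v = -1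
  one_le_closedNeighborhood : ∀ v, 1 ≤ f v + ∑ u ∈ G.neighborFinset v, f u

theorem IsSignedDominating.odd (hf : IsSignedDominating G f) (v : V) : Odd (f v) := by
  rcases hf.eq_one_or_neg_one v with h | h <;> simp [h]

theorem IsSignedDominating.signedDomNum_eq (hf : IsSignedDominating G f)
    (hmin : ∀ g, IsSignedDominating G g → ∑ v, f v ≤ ∑ v, g v) : signedDomNum G = ∑ v, f v := by
  refine IsLeast.csInf_eq
    ⟨⟨f, hf.eq_one_or_neg_one, hf.one_le_closedNeighborhood, rfl⟩, ?_⟩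
  rintro _ ⟨g, hsign, hdom, rfl⟩
  exact hmin g ⟨hsign, hdom⟩

end SignedDominating

section CompleteMultipartite

open Fintype (card)
open SimpleGraph (completeMultipartiteGraph)
open scoped Finset

variable {ι : Type*} {V : ι → Type*} [∀ i, Fintype (V i)] {f : (Σ i, V i) → ℤ}

/-- The total `f(V_i)` of a vertex weighting over the `i`-th part of a multipartite graph. -/
def partWeight (f : (Σ i, V i) → ℤ) (i : ι) : ℤ :=
  ∑ x, f ⟨i, x⟩

theorem exists_sign_partWeight_eq {s : ι → ℤ} (hs : ∀ i, |s i| ≤ card (V i))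
    (hparity : ∀ i, Even (s i) ↔ Even (card (V i))) :
    ∃ f : (Σ i, V i) → ℤ, (∀ v, f v = 1 ∨ f v = -1) ∧ partWeight f = s := by
  choose g hsign hsum using fun i => exists_sign_sum_eq (hs i) (hparity i)
  exact ⟨fun v => g v.1 v.2, fun v => hsign v.1 v.2, funext hsum⟩

variable [Fintype ι]

theorem sum_partWeight (f : (Σ i, V i) → ℤ) : ∑ i, partWeight f i = ∑ v, f v :=
  (Fintype.sum_sigma f).symm

theorem sum_neighborFinset_completeMultipartiteGraph (f : (Σ i, V i) → ℤ) (v : Σ i, V i)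
    [Fintype ((completeMultipartiteGraph V).neighborSet v)] :
    ∑ u ∈ (completeMultipartiteGraph V).neighborFinset v, f u
      = ∑ u, f u - partWeight f v.1 := by
  have hneighbor : (completeMultipartiteGraph V).neighborFinset v
      = (Finset.univ.erase v.1).sigma fun _ => Finset.univ := by
    ext u
    simp [eq_comm]
  rw [hneighbor, Finset.sum_sigma, ← sum_partWeight]
  exact Finset.sum_erase_eq_sub (Finset.mem_univ v.1)

theorem isSignedDominating_completeMultipartiteGraph_iff :
    IsSignedDominating (completeMultipartiteGraph V) f ↔
      (∀ v, f v = 1 ∨ f v = -1) ∧ ∀ v, partWeight f v.1 < ∑ u, f u + f v := by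
  refine ⟨fun h => ⟨h.1, fun v => ?_⟩, fun h => ⟨h.1, fun v => ?_⟩⟩
  · have := h.one_le_closedNeighborhood v
    rw [sum_neighborFinset_completeMultipartiteGraph] at this
    omega
  · have := h.2 v
    rw [sum_neighborFinset_completeMultipartiteGraph]
    omega

theorem isSignedDominating_of_partWeight_add_two_le (hsign : ∀ v, f v = 1 ∨ f v = -1)
    (hpart : ∀ i, partWeight f i + 2 ≤ ∑ v, f v) :
    IsSignedDominating (completeMultipartiteGraph V) f := by
  refine isSignedDominating_completeMultipartiteGraph_iff.mpr ⟨hsign, fun v => ?_⟩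
  have := hpart v.1
  rcases hsign v with h | h <;> omega

namespace IsSignedDominating

theorem even_partWeight_iff (hf : IsSignedDominating (completeMultipartiteGraph V) f) (i : ι) :
    Even (partWeight f i) ↔ Even (card (V i)) :=
  even_sum_iff_even_card_of_forall_odd fun x _ => hf.odd ⟨i, x⟩

theorem even_sum_iff (hf : IsSignedDominating (completeMultipartiteGraph V) f) :
    Even (∑ v, f v) ↔ Even #{i | Odd (card (V i))} := by
  rw [even_sum_iff_even_card_of_forall_odd fun v _ => hf.odd v, Finset.card_univ,
    Fintype.card_sigma, Finset.even_sum_iff_even_card_odd]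

variable [∀ i, Nonempty (V i)]

theorem partWeight_add_two_le_or (hf : IsSignedDominating (completeMultipartiteGraph V) f)
    (i : ι) : partWeight f i + 2 ≤ ∑ v, f v ∨
      partWeight f i = card (V i) ∧ partWeight f i ≤ ∑ v, f v := by
  obtain ⟨hsign, hdom⟩ := isSignedDominating_completeMultipartiteGraph_iff.mp hf
  by_cases hneg : ∃ x, f ⟨i, x⟩ = -1
  · obtain ⟨x, hx⟩ := hneg
    have : partWeight f i < ∑ v, f v + f ⟨i, x⟩ := hdom ⟨i, x⟩
    left
    omega
  · have hone (x : V i) : f ⟨i, x⟩ = 1 := (hsign ⟨i, x⟩).resolve_right fun hx => hneg ⟨x, hx⟩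
    obtain ⟨x⟩ := ‹∀ i, Nonempty (V i)› i
    have : partWeight f i < ∑ v, f v + f ⟨i, x⟩ := hdom ⟨i, x⟩
    rw [hone x] at this
    exact .inr ⟨by simp [partWeight, hone], by omega⟩

theorem sum_pos [Nonempty ι] (hf : IsSignedDominating (completeMultipartiteGraph V) f) :
    0 < ∑ v, f v := by
  by_contra! hw
  have hpart (i : ι) : partWeight f i + 2 ≤ ∑ v, f v := by
    have hcard : 0 < card (V i) := Fintype.card_pos
    have := hf.partWeight_add_two_le_or i
    omega
  obtain ⟨i⟩ := ‹Nonempty ι›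
  have hle : ∑ j, partWeight f j ≤ partWeight f i := by
    rw [← Finset.add_sum_erase _ _ (Finset.mem_univ i), add_le_iff_nonpos_right]
    exact Finset.sum_nonpos fun j _ => by linarith [hpart j]
  linarith [hpart i, sum_partWeight f]

theorem two_add_card_odd_le_of_sum_eq_two (hf : IsSignedDominating (completeMultipartiteGraph V) f)
    (hw : ∑ v, f v = 2) :
    2 + #{i | Odd (card (V i))} ≤ 2 * (#{i | card (V i) = 1} + #{i | card (V i) = 2}) := by
  have hpart (i : ι) : partWeight f i + (if Odd (card (V i)) then 1 else 0)
      ≤ 2 * ((if card (V i) = 1 then 1 else 0) + if card (V i) = 2 then 1 else 0) := by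
    have hcard : 0 < card (V i) := Fintype.card_pos
    have hparity := hf.even_partWeight_iff i
    have := hf.partWeight_add_two_le_or i
    rw [Int.even_iff, Nat.even_iff] at hparity
    simp only [Nat.odd_iff]
    split_ifs <;> omega
  have hsum := Finset.sum_le_sum fun i (_ : i ∈ Finset.univ) => hpart i
  rw [Finset.sum_add_distrib, ← Finset.mul_sum, Finset.sum_add_distrib, sum_partWeight, hw] at hsum
  simp only [Finset.sum_boole] at hsum
  exact_mod_cast hsum

end IsSignedDominating

theorem exists_isSignedDominating_sum_eq_card_odd_add_two {e : ι} [Nonempty (V e)]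
    (he : Even (card (V e))) (ht : 2 ≤ #{i | Odd (card (V i))}) :
    ∃ f, IsSignedDominating (completeMultipartiteGraph V) f ∧
      ∑ v, f v = #{i | Odd (card (V i))} + 2 := by
  let s (i : ι) : ℤ := (if Odd (card (V i)) then 1 else 0) + if i = e then 2 else 0
  have hs (i : ι) : 0 ≤ s i ∧ s i ≤ 2 ∧ s i ≤ card (V i) ∧ (Even (s i) ↔ Even (card (V i))) := by
    have hcard : 0 < card (V e) := Fintype.card_pos
    simp only [s, Int.even_iff, Nat.even_iff, Nat.odd_iff] at he ⊢
    rcases eq_or_ne i e with rfl | hi <;> split_ifs <;> omega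
  obtain ⟨f, hsign, hpart⟩ := exists_sign_partWeight_eq (V := V) (s := s)
    (fun i => abs_le.mpr (by have := hs i; omega)) fun i => (hs i).2.2.2
  have hsum : ∑ v, f v = #{i | Odd (card (V i))} + 2 := by
    rw [← sum_partWeight, hpart]
    simp [s, Finset.sum_add_distrib]
  refine ⟨f, isSignedDominating_of_partWeight_add_two_le hsign fun i => ?_, hsum⟩
  rw [hpart, hsum]
  have := hs i
  omega

theorem signedDomNum_eq_four_t_two_general [∀ i, Nonempty (V i)] (hι : 3 ≤ card ι)
    (ht : #{i | Odd (card (V i))} = 2)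
    (hI : #{i | card (V i) = 1} + #{i | card (V i) = 2} ≤ 1) :
    signedDomNum (completeMultipartiteGraph V) = 4 := by
  obtain ⟨e, -, he⟩ : ∃ e ∈ Finset.univ, e ∉ ({i | Odd (card (V i))} : Finset ι) :=
    Finset.exists_mem_notMem_of_card_lt_card (by rw [ht, Finset.card_univ]; omega)
  have heven : Even (card (V e)) := by simpa using he
  obtain ⟨f, hf, hsum⟩ := exists_isSignedDominating_sum_eq_card_odd_add_two heven ht.ge
  have hfour : ∑ v, f v = 4 := by
    rw [hsum, ht]
    norm_num
  rw [← hfour]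
  refine hf.signedDomNum_eq fun g hg => ?_
  have : Nonempty ι := ⟨e⟩
  have hpos : 0 < ∑ v, g v := hg.sum_pos
  have hne_two : ∑ v, g v ≠ 2 := fun hw => by
    have := hg.two_add_card_odd_le_of_sum_eq_two hw
    omega
  obtain ⟨m, hm⟩ : Even (∑ v, g v) := hg.even_sum_iff.mpr (ht ▸ even_two)
  omega

end CompleteMultipartite

theorem signedDomNum_eq_four_t_two
    (k : ℕ) (hk : 3 ≤ k) (n : Fin k → ℕ) (hn : ∀ i, 0 < n i)
    (ht : (Finset.univ.filter fun i => Odd (n i)).card = 2)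
    (hI : (Finset.univ.filter fun i => n i = 1).card
      + (Finset.univ.filter fun i => n i = 2).card ≤ 1) :
    signedDomNum (SimpleGraph.completeMultipartiteGraph fun i : Fin k => Fin (n i)) = 4 := by
  have (i : Fin k) : Nonempty (Fin (n i)) := ⟨⟨0, hn i⟩⟩
  exact signedDomNum_eq_four_t_two_general (by simpa using hk) (by simpa using ht)
    (by simpa using hI)
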